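/- Let 0 < ε ≤ 1/2. Over the noiseless-feedback rewrite channel with crossover ε, let U be any finite-valued random variable, let X₁ ∈ {0,1} be a (possibly randomized) function of U, and let X₂ ∈ {no-rewrite, 0, 1} be a (possibly randomized) function of (U, X₁, Y₁), with all local randomness independent of the channel noises E₁, E₂. Then for every u with P(U = u) > 0, ε² ≤ P(Y₂ = 1 | U = u) ≤ 1 − ε². Consequently, if P(Y₂ = 1) = ε, then I(U; Y₂) ≤ h_b(ε) − h_b(ε²). -/

import Mathlib

open Classical

noncomputable def pOf {Ω α : Type*} [Fintype Ω] (μ : Ω → ℝ) (X : Ω → α) (x : α) : ℝ :=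
  ∑ ω, if X ω = x then μ ω else 0

noncomputable def pr {Ω : Type*} [Fintype Ω] (μ : Ω → ℝ) (E : Ω → Prop) : ℝ :=
  ∑ ω, if E ω then μ ω else 0

noncomputable def KL {α : Type*} [Fintype α] (p q : α → ℝ) : ℝ :=
  ∑ x, p x * Real.logb 2 (p x / q x)

noncomputable def TV {α : Type*} [Fintype α] (p q : α → ℝ) : ℝ :=
  (∑ x, |p x - q x|) / 2

noncomputable def Hent {Ω α : Type*} [Fintype Ω] [Fintype α] (μ : Ω → ℝ) (X : Ω → α) : ℝ :=
  -∑ x, pOf μ X x * Real.logb 2 (pOf μ X x)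

noncomputable def condH {Ω α β : Type*} [Fintype Ω] [Fintype α] [Fintype β]
    (μ : Ω → ℝ) (X : Ω → α) (Y : Ω → β) : ℝ :=
  Hent μ (fun ω => (X ω, Y ω)) - Hent μ Y

noncomputable def Iinfo {Ω α β : Type*} [Fintype Ω] [Fintype α] [Fintype β]
    (μ : Ω → ℝ) (X : Ω → α) (Y : Ω → β) : ℝ :=
  Hent μ X + Hent μ Y - Hent μ (fun ω => (X ω, Y ω))

noncomputable def hb (p : ℝ) : ℝ :=
  -(p * Real.logb 2 p) - (1 - p) * Real.logb 2 (1 - p)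

noncomputable def bern (p : ℝ) : Bool → ℝ := fun b => if b then p else 1 - p

/-!
Whatever the encoder and the rewrite map do, each output bit is produced by some pair of noise bits:
choose `e₁` so that the first round yields the bit, then choose `e₂` so that a rewrite, if there is
one, yields it again. Every noise pair has probability at least `ε ^ 2`, so both values of `Y₂` have
conditional probability at least `ε ^ 2` given `U = u`. By concavity of the binary entropy each
conditional law of `Y₂` then has entropy at least `hb (ε ^ 2)`; subtract the average of these
entropies from `H(Y₂)`.
-/

section MassFunction

variable {Ω α β : Type*} [Fintype Ω] {μ : Ω → ℝ}

theorem pr_nonneg (hμ : ∀ ω, 0 ≤ μ ω) (E : Ω → Prop) : 0 ≤ pr μ E :=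
  Finset.sum_nonneg fun ω _ => ite_nonneg (hμ ω) le_rfl

theorem pr_mono (hμ : ∀ ω, 0 ≤ μ ω) {E F : Ω → Prop} (h : ∀ ω, E ω → F ω) : pr μ E ≤ pr μ F := by
  refine Finset.sum_le_sum fun ω _ => ?_
  by_cases hE : E ω
  · rw [if_pos hE, if_pos (h ω hE)]
  · rw [if_neg hE]
    exact ite_nonneg (hμ ω) le_rfl

theorem sum_pOf [Fintype α] (μ : Ω → ℝ) (X : Ω → α) : ∑ x, pOf μ X x = ∑ ω, μ ω := by
  simp only [pOf]
  rw [Finset.sum_comm]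
  simp

theorem pOf_pair (μ : Ω → ℝ) (X : Ω → α) (Y : Ω → β) (x : α) (y : β) :
    pOf μ (fun ω => (X ω, Y ω)) (x, y) = pr μ (fun ω => X ω = x ∧ Y ω = y) :=
  congrArg (pr μ) (funext fun _ => propext Prod.mk_inj)

theorem sum_pOf_pair_left [Fintype α] (μ : Ω → ℝ) (X : Ω → α) (Y : Ω → β) (y : β) :
    ∑ x, pOf μ (fun ω => (X ω, Y ω)) (x, y) = pOf μ Y y := by
  simp only [pOf, Prod.mk.injEq, ite_and]
  rw [Finset.sum_comm]
  simp

theorem pOf_pair_eq_zero (hμ : ∀ ω, 0 ≤ μ ω) (X : Ω → α) {Y : Ω → β} (x : α) {y : β}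
    (hy : pOf μ Y y = 0) : pOf μ (fun ω => (X ω, Y ω)) (x, y) = 0 := by
  rw [pOf_pair]
  exact le_antisymm ((pr_mono hμ fun _ => And.right).trans hy.le) (pr_nonneg hμ _)

theorem pOf_false (μ : Ω → ℝ) (Y : Ω → Bool) : pOf μ Y false = ∑ ω, μ ω - pOf μ Y true := by
  rw [← sum_pOf μ Y, Fintype.sum_bool]
  ring

theorem pOf_true_mem_Icc (hμ1 : ∑ ω, μ ω = 1) {Y : Ω → Bool} {δ : ℝ}
    (hY : ∀ y, δ ≤ pOf μ Y y) : pOf μ Y true ∈ Set.Icc δ (1 - δ) := by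
  refine ⟨hY true, ?_⟩
  have hfalse : δ ≤ 1 - pOf μ Y true := hμ1 ▸ pOf_false μ Y ▸ hY false
  linarith

/-- The mass function of `μ` conditioned on the event `Y = y`. If that event has mass `0` this is
the zero function, as `x / 0 = 0`. -/
noncomputable def condOn (μ : Ω → ℝ) (Y : Ω → β) (y : β) : Ω → ℝ :=
  fun ω => (if Y ω = y then μ ω else 0) / pOf μ Y y

theorem sum_condOn {Y : Ω → β} {y : β} (hy : pOf μ Y y ≠ 0) : ∑ ω, condOn μ Y y ω = 1 := by
  simp only [condOn]
  rw [← Finset.sum_div]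
  exact div_self hy

theorem pOf_condOn (μ : Ω → ℝ) (X : Ω → α) (Y : Ω → β) (x : α) (y : β) :
    pOf (condOn μ Y y) X x = pOf μ (fun ω => (X ω, Y ω)) (x, y) / pOf μ Y y := by
  simp only [pOf, condOn, Finset.sum_div, Prod.mk.injEq, ite_and, ite_div, zero_div]

theorem pOf_condOn_eq_pr_div_pr (μ : Ω → ℝ) (X : Ω → α) (Y : Ω → β) (x : α) (y : β) :
    pOf (condOn μ Y y) X x = pr μ (fun ω => X ω = x ∧ Y ω = y) / pr μ (fun ω => Y ω = y) := by
  rw [pOf_condOn, pOf_pair]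
  rfl

end MassFunction

section Entropy

theorem mul_div_mul_logb_div (b a : ℝ) {m : ℝ} (hm : m ≠ 0) :
    m * (a / m * Real.logb b (a / m)) = a * Real.logb b a - a * Real.logb b m := by
  rcases eq_or_ne a 0 with rfl | ha
  · simp
  · rw [Real.logb_div ha hm]
    field_simp

variable {Ω α β : Type*} [Fintype Ω] [Fintype α] {μ : Ω → ℝ}

theorem pOf_mul_hent_condOn (hμ : ∀ ω, 0 ≤ μ ω) (X : Ω → α) (Y : Ω → β) (y : β) :
    pOf μ Y y * Hent (condOn μ Y y) X =
      pOf μ Y y * Real.logb 2 (pOf μ Y y) -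
        ∑ x, pOf μ (fun ω => (X ω, Y ω)) (x, y) *
          Real.logb 2 (pOf μ (fun ω => (X ω, Y ω)) (x, y)) := by
  rcases eq_or_ne (pOf μ Y y) 0 with hy | hy
  · simp [hy, pOf_pair_eq_zero hμ X _ hy]
  · simp only [Hent, pOf_condOn, mul_neg, Finset.mul_sum, mul_div_mul_logb_div 2 _ hy,
      Finset.sum_sub_distrib, ← Finset.sum_mul, sum_pOf_pair_left]
    ring

variable [Fintype β]

theorem condH_eq_sum (hμ : ∀ ω, 0 ≤ μ ω) (X : Ω → α) (Y : Ω → β) :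
    condH μ X Y = ∑ y, pOf μ Y y * Hent (condOn μ Y y) X := by
  simp only [pOf_mul_hent_condOn hμ, Finset.sum_sub_distrib]
  simp only [condH, Hent, Fintype.sum_prod_type_right]
  ring

theorem hent_pair_comm (μ : Ω → ℝ) (X : Ω → α) (Y : Ω → β) :
    Hent μ (fun ω => (X ω, Y ω)) = Hent μ (fun ω => (Y ω, X ω)) := by
  simp only [Hent, pOf_pair, Fintype.sum_prod_type, and_comm]
  rw [Finset.sum_comm]

theorem iinfo_eq_hent_sub_condH (μ : Ω → ℝ) (X : Ω → α) (Y : Ω → β) :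
    Iinfo μ X Y = Hent μ Y - condH μ Y X := by
  rw [Iinfo, condH, hent_pair_comm μ X Y]
  ring

theorem hent_bool (hμ1 : ∑ ω, μ ω = 1) (Y : Ω → Bool) : Hent μ Y = hb (pOf μ Y true) := by
  simp only [Hent, Fintype.sum_bool, pOf_false, hμ1, hb]
  ring

theorem hb_eq_binEntropy_div_log_two (p : ℝ) : hb p = Real.binEntropy p / Real.log 2 := by
  simp only [hb, Real.binEntropy_eq_negMulLog_add_negMulLog_one_sub, Real.negMulLog, Real.logb]
  ring

theorem hb_le_hb_of_mem_Icc {δ p : ℝ} (hδ : 0 ≤ δ) (hp : p ∈ Set.Icc δ (1 - δ)) :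
    hb δ ≤ hb p := by
  have hδp : δ ≤ 1 - δ := hp.1.trans hp.2
  have hmin : min (Real.binEntropy δ) (Real.binEntropy (1 - δ)) ≤ Real.binEntropy p :=
    Real.strictConcave_binEntropy.concaveOn.ge_on_segment ⟨hδ, by linarith⟩
      ⟨by linarith, by linarith⟩ (segment_eq_Icc hδp ▸ hp)
  rw [Real.binEntropy_one_sub, min_self] at hmin
  rw [hb_eq_binEntropy_div_log_two, hb_eq_binEntropy_div_log_two]
  gcongr

theorem hb_le_condH (hμ : ∀ ω, 0 ≤ μ ω) (hμ1 : ∑ ω, μ ω = 1) {X : Ω → Bool} {Y : Ω → β} {δ : ℝ}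
    (hδ : 0 ≤ δ) (h : ∀ y, pOf μ Y y ≠ 0 → pOf (condOn μ Y y) X true ∈ Set.Icc δ (1 - δ)) :
    hb δ ≤ condH μ X Y :=
  calc
    hb δ = ∑ y, pOf μ Y y * hb δ := by rw [← Finset.sum_mul, sum_pOf, hμ1, one_mul]
    _ ≤ ∑ y, pOf μ Y y * Hent (condOn μ Y y) X := by
      refine Finset.sum_le_sum fun y _ => ?_
      rcases eq_or_ne (pOf μ Y y) 0 with hy | hy
      · simp only [hy, zero_mul, le_refl]
      · rw [hent_bool (sum_condOn hy)]
        exact mul_le_mul_of_nonneg_left (hb_le_hb_of_mem_Icc hδ (h y hy)) (pr_nonneg hμ _)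
    _ = condH μ X Y := (condH_eq_sum hμ X Y).symm

end Entropy

theorem mul_pr_le_pr_and_of_forall_exists {W N : Type*} [Fintype W] [Fintype N]
    {ν : W → ℝ} {κ : N → ℝ} {δ : ℝ}
    (hν : ∀ w, 0 ≤ ν w) (hκ : ∀ n, 0 ≤ κ n) (hκ1 : ∑ n, κ n = 1)
    {F : W × N → Prop} (hF : ∀ w, ∃ n, F (w, n) ∧ δ ≤ κ n) (E : W → Prop) :
    δ * pr (fun ω : W × N => ν ω.1 * κ ω.2) (fun ω => E ω.1) ≤
      pr (fun ω : W × N => ν ω.1 * κ ω.2) (fun ω => F ω ∧ E ω.1) := by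
  simp only [pr, Fintype.sum_prod_type, Finset.mul_sum (s := (Finset.univ : Finset W))]
  refine Finset.sum_le_sum fun w _ => ?_
  by_cases hE : E w
  · obtain ⟨n, hFn, hn⟩ := hF w
    calc
      δ * ∑ n, (if E w then ν w * κ n else 0) = ν w * δ := by
        simp only [hE, if_true, ← Finset.mul_sum, hκ1, mul_one, mul_comm]
      _ ≤ ν w * κ n := mul_le_mul_of_nonneg_left hn (hν w)
      _ = if F (w, n) ∧ E w then ν w * κ n else 0 := (if_pos ⟨hFn, hE⟩).symm
      _ ≤ ∑ n, if F (w, n) ∧ E w then ν w * κ n else 0 :=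
        Finset.single_le_sum (f := fun n => if F (w, n) ∧ E w then ν w * κ n else 0)
          (fun n _ => ite_nonneg (mul_nonneg (hν w) (hκ n)) le_rfl) (Finset.mem_univ n)
  · simp [hE]

/-- The output `Y₂` of the rewrite channel with first input `x₁`, rewrite map `x₂` (a function of
`Y₁`; `none` stands for no-rewrite) and noise pair `e = (E₁, E₂)`. -/
def rewriteOutput (x₁ : Bool) (x₂ : Bool → Option Bool) (e : Bool × Bool) : Bool :=
  (x₂ (Bool.xor x₁ e.1)).elim (Bool.xor x₁ e.1) fun b => Bool.xor b e.2

theorem rewriteOutput_surjective (x₁ : Bool) (x₂ : Bool → Option Bool) :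
    Function.Surjective (rewriteOutput x₁ x₂) := by
  intro y
  rcases hy : x₂ y with _ | b
  · exact ⟨(Bool.xor x₁ y, false), by simp [rewriteOutput, hy]⟩
  · exact ⟨(Bool.xor x₁ y, Bool.xor b y), by simp [rewriteOutput, hy]⟩

theorem le_bern {δ p : ℝ} (hp : δ ≤ p) (hp' : δ ≤ 1 - p) (b : Bool) : δ ≤ bern p b := by
  cases b
  · exact hp'
  · exact hp

theorem sq_le_bern_mul_bern {δ p : ℝ} (hδ : 0 ≤ δ) (hp : δ ≤ p) (hp' : δ ≤ 1 - p) (b c : Bool) :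
    δ ^ 2 ≤ bern p b * bern p c :=
  sq δ ▸ mul_le_mul (le_bern hp hp' b) (le_bern hp hp' c) hδ (hδ.trans (le_bern hp hp' b))

theorem sum_bern (p : ℝ) : ∑ b, bern p b = 1 := by
  simp [bern]

theorem sum_bern_mul_bern (p q : ℝ) : ∑ e : Bool × Bool, bern p e.1 * bern q e.2 = 1 := by
  rw [Fintype.sum_prod_type, ← Finset.sum_mul_sum, sum_bern, sum_bern, mul_one]

theorem stmt7_general {W 𝒰 : Type*} [Fintype W] [Fintype 𝒰]
    {ν : W → ℝ} (hν0 : ∀ w, 0 ≤ ν w) (hν1 : ∑ w, ν w = 1)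
    {κ : Bool × Bool → ℝ} {δ : ℝ} (hδ : 0 ≤ δ) (hκ : ∀ e, δ ≤ κ e) (hκ1 : ∑ e, κ e = 1)
    (U : W → 𝒰) (X1 : W → Bool) (X2 : W → Bool → Option Bool) :
    let μ : W × Bool × Bool → ℝ := fun ω => ν ω.1 * κ ω.2
    let Uv : W × Bool × Bool → 𝒰 := fun ω => U ω.1
    let Y2 : W × Bool × Bool → Bool := fun ω => rewriteOutput (X1 ω.1) (X2 ω.1) ω.2
    (∀ u : 𝒰, pr μ (fun ω => Uv ω = u) ≠ 0 →
        pr μ (fun ω => Y2 ω = true ∧ Uv ω = u) / pr μ (fun ω => Uv ω = u) ∈ Set.Icc δ (1 - δ))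
    ∧ Iinfo μ Uv Y2 ≤ hb (pr μ (fun ω => Y2 ω = true)) - hb δ := by
  intro μ Uv Y2
  have hκ0 (e) : 0 ≤ κ e := hδ.trans (hκ e)
  have hμ0 (ω) : 0 ≤ μ ω := mul_nonneg (hν0 _) (hκ0 _)
  have hμ1 : ∑ ω, μ ω = 1 := by
    simp only [μ, Fintype.sum_prod_type' fun w e => ν w * κ e, ← Finset.mul_sum, hκ1, mul_one, hν1]
  have hcond (u) (hu : pOf μ Uv u ≠ 0) : pOf (condOn μ Uv u) Y2 true ∈ Set.Icc δ (1 - δ) := by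
    refine pOf_true_mem_Icc (sum_condOn hu) fun y => ?_
    rw [pOf_condOn_eq_pr_div_pr, le_div_iff₀ ((pr_nonneg hμ0 _).lt_of_ne' hu)]
    refine mul_pr_le_pr_and_of_forall_exists hν0 hκ0 hκ1 (fun w => ?_) (fun w => U w = u)
    obtain ⟨e, he⟩ := rewriteOutput_surjective (X1 w) (X2 w) y
    exact ⟨e, he, hκ e⟩
  constructor
  · intro u hu
    exact pOf_condOn_eq_pr_div_pr μ Y2 Uv true u ▸ hcond u hu
  · rw [iinfo_eq_hent_sub_condH, hent_bool hμ1]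
    exact sub_le_sub_left (hb_le_condH hμ0 hμ1 hδ hcond) _

/-- Converse for the noiseless-feedback rewrite channel with crossover
`0 < ε ≤ 1/2`: for an arbitrary finite-valued `U`, an encoder `X₁` that is a (randomized)
function of `U` and local randomness `w`, and a rewrite map `X₂` depending on `(w, Y₁)`
(all local randomness `w ~ ν` independent of the channel noises `E₁, E₂ ~ Bern(ε)`),
one has `ε² ≤ P(Y₂=1 | U=u) ≤ 1−ε²` for all `u` with `P(U=u) > 0`; consequently,
if `P(Y₂=1) = ε` then `I(U;Y₂) ≤ h_b(ε) − h_b(ε²)`. -/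
theorem stmt7 {W 𝒰 : Type*} [Fintype W] [Fintype 𝒰]
    (ε : ℝ) (hε0 : 0 < ε) (hε1 : ε ≤ 1 / 2)
    (ν : W → ℝ) (hν0 : ∀ w, 0 ≤ ν w) (hν1 : ∑ w, ν w = 1)
    (U : W → 𝒰) (X1 : W → Bool) (X2 : W → Bool → Option Bool) :
    let μ : W × Bool × Bool → ℝ :=
      fun ω => ν ω.1 * bern ε ω.2.1 * bern ε ω.2.2
    let Uv : W × Bool × Bool → 𝒰 := fun ω => U ω.1
    let Y1 : W × Bool × Bool → Bool := fun ω => Bool.xor (X1 ω.1) ω.2.1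
    let Y2 : W × Bool × Bool → Bool :=
      fun ω => match X2 ω.1 (Y1 ω) with
        | none => Y1 ω
        | some b => Bool.xor b ω.2.2
    (∀ u : 𝒰, pr μ (fun ω => Uv ω = u) ≠ 0 →
        ε ^ 2 ≤ pr μ (fun ω => Y2 ω = true ∧ Uv ω = u) / pr μ (fun ω => Uv ω = u)
        ∧ pr μ (fun ω => Y2 ω = true ∧ Uv ω = u) / pr μ (fun ω => Uv ω = u) ≤ 1 - ε ^ 2)
    ∧ (pr μ (fun ω => Y2 ω = true) = ε → Iinfo μ Uv Y2 ≤ hb ε - hb (ε ^ 2)) := by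
  intro μ Uv Y1 Y2
  have hμ : μ = fun ω => ν ω.1 * (bern ε ω.2.1 * bern ε ω.2.2) := funext fun _ => mul_assoc _ _ _
  have hY2 : Y2 = fun ω => rewriteOutput (X1 ω.1) (X2 ω.1) ω.2 := by
    funext ω
    simp only [Y2, Y1, rewriteOutput]
    cases X2 ω.1 (Bool.xor (X1 ω.1) ω.2.1) <;> rfl
  obtain ⟨hcond, hinfo⟩ := stmt7_general hν0 hν1 (sq_nonneg ε)
    (fun e => sq_le_bern_mul_bern hε0.le le_rfl (by linarith) e.1 e.2) (sum_bern_mul_bern ε ε)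
    U X1 X2
  rw [hμ, hY2]
  exact ⟨hcond, fun hY => hinfo.trans_eq (congrArg (hb · - hb (ε ^ 2)) hY)⟩
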